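/- Let s be a complex number with Re(s) > 1 and for θ ∈ (0,π) set f_s(θ) := ∑_{n=1}^∞ (sin(nθ)/sin(θ)) · n^{−(s+1)}. Then the square mean value (2/π) ∫₀^π f_s(θ)² sin²(θ) dθ equals ∑_{n=1}^∞ n^{−(2s+2)} = ζ(2s+2). (This is the square moment ∫_{SU(2)} ζ_{SU(2)}(s,g)² dg = ζ_{SU(2)}(2s+2) of the Witten L-function of SU(2).) -/

import Mathlib

open Real

/-- The Witten L-function of SU(2) at the conjugacy class `[θ]`:
`f_s(θ) = ∑_{n≥1} (sin(nθ)/sin θ) n^{-(s+1)}`. -/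
noncomputable def wittenL (s : ℂ) (θ : ℝ) : ℂ :=
  ∑' n : ℕ, ((Real.sin (((n : ℝ) + 1) * θ) / Real.sin θ : ℝ) : ℂ)
    * ((n : ℂ) + 1) ^ (-(s + 1))

theorem integral_cos_int_mul (k : ℤ) :
    ∫ θ in (0:ℝ)..π, Real.cos (k * θ) = if k = 0 then π else 0 := by
  split_ifs with h
  · simp [h]
  · have hk : (k : ℝ) ≠ 0 := by exact_mod_cast h
    rw [intervalIntegral.integral_comp_mul_left (fun x => Real.cos x) hk]
    simp [integral_cos, Real.sin_int_mul_pi]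

theorem integral_sin_mul_sin_nat_add_one (m n : ℕ) :
    ∫ θ in (0:ℝ)..π, Real.sin (((m : ℝ) + 1) * θ) * Real.sin (((n : ℝ) + 1) * θ)
      = if m = n then π / 2 else 0 := by
  have key : ∀ θ : ℝ, Real.sin (((m : ℝ) + 1) * θ) * Real.sin (((n : ℝ) + 1) * θ)
      = (Real.cos (((m - n : ℤ) : ℝ) * θ) - Real.cos (((m + n + 2 : ℤ) : ℝ) * θ)) / 2 := by
    intro θ
    have h1 : ((m - n : ℤ) : ℝ) * θ = ((m : ℝ) + 1) * θ - ((n : ℝ) + 1) * θ := by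
      push_cast; ring
    have h2 : ((m + n + 2 : ℤ) : ℝ) * θ = ((m : ℝ) + 1) * θ + ((n : ℝ) + 1) * θ := by
      push_cast; ring
    rw [h1, h2, Real.cos_sub, Real.cos_add]
    ring
  have hint : ∀ k : ℤ, IntervalIntegrable (fun θ : ℝ => Real.cos (k * θ))
      MeasureTheory.volume 0 π := fun k => Continuous.intervalIntegrable (by fun_prop) _ _
  simp_rw [key]
  rw [intervalIntegral.integral_div, intervalIntegral.integral_sub (hint _) (hint _),
    integral_cos_int_mul, integral_cos_int_mul, if_neg (by omega : (m + n + 2 : ℤ) ≠ 0)]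
  by_cases h : m = n
  · simp [h]
  · rw [if_neg (by omega), if_neg h]; simp

theorem wittenL_mul_sin (s : ℂ) {θ : ℝ} (hθ : Real.sin θ ≠ 0) :
    wittenL s θ * (Real.sin θ : ℂ)
      = ∑' n : ℕ, ((n : ℂ) + 1) ^ (-(s + 1)) * (Real.sin (((n : ℝ) + 1) * θ) : ℂ) := by
  have hθ' : (Real.sin θ : ℂ) ≠ 0 := by exact_mod_cast hθ
  rw [wittenL, ← tsum_mul_right]
  refine tsum_congr fun n => ?_
  rw [Complex.ofReal_div]
  field_simp

theorem summable_norm_nat_add_one_cpow_neg {w : ℂ} (hw : 1 < w.re) :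
    Summable fun n : ℕ => ‖((n : ℂ) + 1) ^ (-w)‖ := by
  have h := (Complex.summable_one_div_nat_cpow (p := w)).2 hw
  simpa [Complex.cpow_neg] using ((summable_nat_add_iff 1).2 h).norm

/-- Parseval's identity for absolutely convergent sine series (bilinear form). -/
theorem integral_tsum_mul_sin_sq {a : ℕ → ℂ} (ha : Summable fun n => ‖a n‖) :
    ∫ θ in (0:ℝ)..π, (∑' n : ℕ, a n * (Real.sin (((n : ℝ) + 1) * θ) : ℂ)) ^ 2
      = (π / 2 : ℂ) * ∑' n : ℕ, a n ^ 2 := by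
  have hab : Summable fun p : ℕ × ℕ => ‖a p.1‖ * ‖a p.2‖ :=
    ha.mul_of_nonneg ha (fun _ => norm_nonneg _) (fun _ => norm_nonneg _)
  have hterm (n : ℕ) (θ : ℝ) :
      ‖a n * (Real.sin (((n : ℝ) + 1) * θ) : ℂ)‖ ≤ ‖a n‖ := by
    rw [norm_mul, Complex.norm_real]
    exact mul_le_of_le_one_right (norm_nonneg _) (Real.abs_sin_le_one _)
  have hsq (θ : ℝ) : HasSum
      (fun p : ℕ × ℕ => (a p.1 * (Real.sin (((p.1 : ℝ) + 1) * θ) : ℂ))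
        * (a p.2 * (Real.sin (((p.2 : ℝ) + 1) * θ) : ℂ)))
      ((∑' n : ℕ, a n * (Real.sin (((n : ℝ) + 1) * θ) : ℂ)) ^ 2) := by
    have hs : Summable fun n => ‖a n * (Real.sin (((n : ℝ) + 1) * θ) : ℂ)‖ :=
      ha.of_nonneg_of_le (fun _ => norm_nonneg _) (hterm · θ)
    rw [sq, tsum_mul_tsum_of_summable_norm hs hs]
    exact (summable_mul_of_summable_norm hs hs).hasSum
  have hsum := intervalIntegral.hasSum_integral_of_dominated_convergence
    (μ := MeasureTheory.volume) (a := 0) (b := π)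
    (fun (p : ℕ × ℕ) (_ : ℝ) => ‖a p.1‖ * ‖a p.2‖)
    (fun p => Continuous.aestronglyMeasurable (by fun_prop))
    (fun p => .of_forall fun θ _ => (norm_mul_le _ _).trans
      (mul_le_mul (hterm _ θ) (hterm _ θ) (norm_nonneg _) (norm_nonneg _)))
    (.of_forall fun _ _ => hab) (by simp) (.of_forall fun θ _ => hsq θ)
  have hcoeff (p : ℕ × ℕ) : ∫ θ in (0:ℝ)..π, (a p.1 * (Real.sin (((p.1 : ℝ) + 1) * θ) : ℂ))
        * (a p.2 * (Real.sin (((p.2 : ℝ) + 1) * θ) : ℂ))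
      = if p.1 = p.2 then a p.1 * a p.2 * (π / 2) else 0 := by
    have h : ∀ θ : ℝ, (a p.1 * (Real.sin (((p.1 : ℝ) + 1) * θ) : ℂ))
        * (a p.2 * (Real.sin (((p.2 : ℝ) + 1) * θ) : ℂ)) = a p.1 * a p.2 *
        ((Real.sin (((p.1 : ℝ) + 1) * θ) * Real.sin (((p.2 : ℝ) + 1) * θ) : ℝ) : ℂ) := by
      intro θ; rw [Complex.ofReal_mul]; ring
    simp_rw [h]
    rw [intervalIntegral.integral_const_mul, intervalIntegral.integral_ofReal,
      integral_sin_mul_sin_nat_add_one]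
    split_ifs <;> simp
  simp_rw [hcoeff] at hsum
  rw [← hsum.tsum_eq, hsum.summable.tsum_prod, ← tsum_mul_left]
  refine tsum_congr fun m => ?_
  rw [tsum_eq_single m fun n hn => if_neg hn.symm, if_pos rfl]
  ring

/-- The square moment of the Witten L-function of SU(2): for `Re(s) > 1`,
`(2/π) ∫₀^π f_s(θ)² sin²θ dθ = ∑_{n≥1} n^{-(2s+2)} = ζ(2s+2)`. -/
theorem square_moment (s : ℂ) (hs : 1 < s.re) :
    (2 / (π : ℂ)) * ∫ θ in (0:ℝ)..π, (wittenL s θ) ^ 2 * ((Real.sin θ : ℂ)) ^ 2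
        = ∑' n : ℕ, ((n : ℂ) + 1) ^ (-(2 * s + 2)) ∧
    (∑' n : ℕ, ((n : ℂ) + 1) ^ (-(2 * s + 2))) = riemannZeta (2 * s + 2) := by
  constructor
  · have hcongr : ∫ θ in (0:ℝ)..π, (wittenL s θ) ^ 2 * ((Real.sin θ : ℂ)) ^ 2
        = ∫ θ in (0:ℝ)..π, (∑' n : ℕ, ((n : ℂ) + 1) ^ (-(s + 1))
            * (Real.sin (((n : ℝ) + 1) * θ) : ℂ)) ^ 2 := by
      refine intervalIntegral.integral_congr_uIoo fun θ hθ => ?_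
      rw [Set.uIoo_of_le pi_pos.le] at hθ
      rw [← mul_pow, wittenL_mul_sin s (Real.sin_pos_of_mem_Ioo hθ).ne']
    have ha := summable_norm_nat_add_one_cpow_neg (w := s + 1) (by simp; linarith)
    have hpi : (π : ℂ) ≠ 0 := by exact_mod_cast pi_ne_zero
    have hpow (n : ℕ) :
        (((n : ℂ) + 1) ^ (-(s + 1))) ^ 2 = ((n : ℂ) + 1) ^ (-(2 * s + 2)) := by
      rw [← Complex.cpow_nat_mul]
      congr 1
      push_cast
      ring
    rw [hcongr, integral_tsum_mul_sin_sq ha, tsum_congr hpow]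
    field_simp
  · rw [zeta_eq_tsum_one_div_nat_add_one_cpow (by simp; linarith)]
    simp_rw [Complex.cpow_neg, one_div]
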